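/- For every integer w, every integer p1, and every nonnegative integer u, the following identity holds: (−1)^w q^{u²−wu} · ( Σ_{c,e,r ≥ 0, c+e+r=u, w−r even} q^{−u(c+e)+2c+2c·p1} C_q(w,r) C_{q²}((w−r)/2+p1, c) C_{q²}((w−r)/2, e) − Σ_{c,e,r ≥ 0, c+e+r=u, w−r odd} q^{−(u−1)(c+e)+2c·p1} C_q(w,r) C_{q²}(1+(w−r−1)/2+p1, c) C_{q²}((w−r−1)/2, e) ) = q^{2u+2u·p1} C_{q²}(p1,u). -/

import Mathlib

open Finset

noncomputable section

/-- The field `ℚ(q)` of rational functions over `ℚ`. -/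
abbrev F : Type := RatFunc ℚ

/-- The indeterminate `q`. -/
noncomputable def qq : F := RatFunc.X

/-- The quantum integer `[n]` with base `v`: `(v^n - v^(-n))/(v - v⁻¹)`. -/
noncomputable def qint (v : F) (n : ℤ) : F := (v ^ n - v ^ (-n)) / (v - v⁻¹)

/-- The quantum factorial `[m]! = [1][2]⋯[m]` with base `v`. -/
noncomputable def qfact (v : F) (m : ℕ) : F := ∏ k ∈ range m, qint v ((k : ℤ) + 1)

/-- The quantum binomial coefficient `C_v(n,d) = [n][n-1]⋯[n-d+1]/[d]!` for `d ≥ 0`,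
and `0` for `d < 0`. -/
noncomputable def qbinom (v : F) (n d : ℤ) : F :=
  if d < 0 then 0
  else (∏ k ∈ range d.toNat, qint v (n - (k : ℤ))) / qfact v d.toNat


lemma qq_ne : qq ≠ 0 := RatFunc.X_ne_zero

lemma qq_pow_ne (n : ℕ) (hn : n ≠ 0) : qq ^ n ≠ 1 := by
  intro h
  have h2 : (Polynomial.X : Polynomial ℚ) ^ n = 1 := by
    apply RatFunc.algebraMap_injective ℚ
    simpa [qq] using h
  have := congrArg Polynomial.natDegree h2
  simp at this
  exact hn this

lemma qint_pow_ne (m : ℕ) (hm : m ≠ 0) (k : ℕ) : qint (qq ^ m) ((k : ℤ) + 1) ≠ 0 := by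
  have hq : qq ^ m ≠ 0 := pow_ne_zero _ qq_ne
  have key : ∀ j : ℕ, (qq ^ m) ^ ((j : ℤ) + 1) - (qq ^ m) ^ (-((j : ℤ) + 1)) ≠ 0 := by
    intro j h
    rw [sub_eq_zero] at h
    have h3 : (qq ^ m) ^ ((j : ℤ) + 1) * (qq ^ m) ^ ((j : ℤ) + 1) = 1 := by
      nth_rw 2 [h]
      rw [← zpow_add₀ hq]; simp
    have h4 : qq ^ (m * (j + 1) * 2) = 1 := by
      rw [← h3, ← pow_two]
      rw [show ((j : ℤ) + 1) = ((j + 1 : ℕ) : ℤ) by push_cast; ring, zpow_natCast, pow_mul, pow_mul]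
    exact qq_pow_ne _ (by positivity) h4
  unfold qint
  refine div_ne_zero (key k) ?_
  have := key 0
  simpa using this

/-- goodness -/
def Good (v : F) : Prop := v ≠ 0 ∧ ∀ k : ℕ, qint v ((k : ℤ) + 1) ≠ 0

lemma good_q : Good qq := ⟨qq_ne, fun k => by simpa using qint_pow_ne 1 one_ne_zero k⟩
lemma good_q2 : Good (qq ^ 2) := ⟨pow_ne_zero _ qq_ne, qint_pow_ne 2 two_ne_zero⟩

lemma qfact_ne {v : F} (hv : Good v) (m : ℕ) : qfact v m ≠ 0 :=
  Finset.prod_ne_zero_iff.2 fun k _ => hv.2 k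

lemma qbinom_nat (v : F) (n : ℤ) (d : ℕ) :
    qbinom v n d = (∏ k ∈ range d, qint v (n - (k : ℤ))) / qfact v d := by
  unfold qbinom
  rw [if_neg (by omega)]; simp

lemma qbinom_zero (v : F) (n : ℤ) : qbinom v n ((0 : ℕ) : ℤ) = 1 := by
  rw [qbinom_nat]; simp [qfact]

lemma qbinom_zero_succ (v : F) (d : ℕ) : qbinom v 0 ((d + 1 : ℕ) : ℤ) = 0 := by
  rw [qbinom_nat, Finset.prod_range_succ']; simp [qint]

lemma qint_rel {v : F} (hv : Good v) (n d : ℤ) :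
    qint v (n + 1) = v ^ (d + 1) * qint v (n - d) + v ^ (d - n) * qint v (d + 1) := by
  have h0 := hv.1
  unfold qint
  rw [mul_div_assoc', mul_div_assoc', ← add_div]
  congr 1
  rw [mul_sub, mul_sub, ← zpow_add₀ h0, ← zpow_add₀ h0, ← zpow_add₀ h0, ← zpow_add₀ h0]
  ring_nf

lemma pascal {v : F} (hv : Good v) (n : ℤ) (d : ℕ) :
    qbinom v (n + 1) ((d + 1 : ℕ) : ℤ) =
      v ^ ((d : ℤ) + 1) * qbinom v n ((d + 1 : ℕ) : ℤ) + v ^ ((d : ℤ) - n) * qbinom v n (d : ℤ) := by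
  rw [qbinom_nat, qbinom_nat, qbinom_nat, Finset.prod_range_succ',
    Finset.prod_range_succ (fun k : ℕ => qint v (n - k))]
  have e : ∏ k ∈ range d, qint v (n + 1 - ((k + 1 : ℕ) : ℤ)) = ∏ k ∈ range d, qint v (n - (k : ℤ)) := by
    refine Finset.prod_congr rfl fun k _ => ?_
    congr 1; push_cast; ring
  have f : qfact v (d + 1) = qfact v d * qint v ((d : ℤ) + 1) := Finset.prod_range_succ _ _
  have h1 := qfact_ne hv d
  have h2 := hv.2 d
  rw [e, f, Nat.cast_zero, sub_zero, qint_rel hv n d]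
  field_simp

/-- generating series -/
def A (n : ℤ) (y : F) : PowerSeries F := PowerSeries.mk fun d => qbinom (qq ^ 2) n (d : ℤ) * y ^ d

lemma A_zero (y : F) : A 0 y = 1 := by
  ext d
  cases d with
  | zero => simp [A]; exact qbinom_zero _ _
  | succ d => rw [A, PowerSeries.coeff_mk, qbinom_zero_succ]; simp [PowerSeries.coeff_one]

lemma A_succ (n : ℤ) (y : F) :
    A (n + 1) y = A n (y * qq ^ 2) * (1 + PowerSeries.C (y * (qq ^ 2) ^ (-n)) * PowerSeries.X) := by
  ext d
  rw [mul_add, mul_one, ← mul_assoc, map_add]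
  cases d with
  | zero => simp [A]; rw [show (0 : ℤ) = ((0 : ℕ) : ℤ) by rfl, qbinom_zero, qbinom_zero]
  | succ d =>
    rw [PowerSeries.coeff_succ_mul_X, PowerSeries.coeff_mul_C]
    simp only [A, PowerSeries.coeff_mk]
    rw [pascal good_q2]
    have h0 := good_q2.1
    rw [sub_eq_add_neg, zpow_add₀ h0, zpow_add₀ h0, zpow_one, zpow_natCast, mul_pow, mul_pow]
    ring

/-- the uniform series -/
def D (p n : ℤ) : PowerSeries F :=
  if Even n then A (n / 2 + p) (qq ^ (-2 * (n / 2) + 2 + 2 * p)) * A (n / 2) (qq ^ (-2 * (n / 2)))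
  else A (1 + (n - 1) / 2 + p) (qq ^ (-2 * ((n - 1) / 2) + 2 * p)) *
    A ((n - 1) / 2) (qq ^ (-2 * ((n - 1) / 2)))

lemma qq_sq_zpow (k : ℤ) : (qq ^ 2) ^ k = qq ^ (2 * k) := by
  rw [zpow_mul]; rfl

lemma D_succ (p n : ℤ) :
    D p (n + 1) = D p n * (1 + PowerSeries.C (qq ^ (-2 * n)) * PowerSeries.X) := by
  have h0 := qq_ne
  have hs : qq ^ 2 = qq ^ (2 : ℤ) := rfl
  rcases Int.even_or_odd n with h | h
  · obtain ⟨k, rfl⟩ := h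
    have e1 : ¬ Even (k + k + 1) := by rintro ⟨j, hj⟩; omega
    have e2 : Even (k + k) := ⟨k, rfl⟩
    rw [D, D, if_neg e1, if_pos e2, show (k + k + 1 - 1) / 2 = k by omega,
      show (k + k) / 2 = k by omega, show 1 + k + p = (k + p) + 1 by ring, A_succ, qq_sq_zpow, hs,
      ← zpow_add₀ h0, ← zpow_add₀ h0,
      show -2 * k + 2 * p + 2 = -2 * k + 2 + 2 * p by ring,
      show -2 * k + 2 * p + 2 * -(k + p) = -2 * (k + k) by ring]
    ring
  · obtain ⟨k, rfl⟩ := h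
    have e1 : ¬ Even (2 * k + 1) := by simp [parity_simps]
    have e2 : Even (2 * k + 1 + 1) := ⟨k + 1, by ring⟩
    rw [D, D, if_neg e1, if_pos e2, show (2 * k + 1 + 1) / 2 = k + 1 by omega,
      show (2 * k + 1 - 1) / 2 = k by omega, A_succ k, qq_sq_zpow, hs,
      ← zpow_add₀ h0, ← zpow_add₀ h0,
      show -2 * (k + 1) + 2 = -2 * k by ring,
      show -2 * (k + 1) + 2 * -k = -2 * (2 * k + 1) by ring,
      show k + 1 + p = 1 + k + p by ring]
    ring

/-- coefficients -/
def dd (p n : ℤ) (m : ℕ) : F := PowerSeries.coeff m (D p n)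

lemma dd_zero (p n : ℤ) : dd p (n + 1) 0 = dd p n 0 := by
  simp [dd, D_succ]

lemma dd_succ (p n : ℤ) (m : ℕ) :
    dd p (n + 1) (m + 1) = dd p n (m + 1) + qq ^ (-2 * n) * dd p n m := by
  rw [dd, D_succ, mul_add, mul_one, ← mul_assoc, map_add, PowerSeries.coeff_succ_mul_X,
    PowerSeries.coeff_mul_C, dd, dd, mul_comm (qq ^ _)]

/-- signed weights -/
def tt (w : ℤ) (r : ℕ) : F := (-1) ^ r * qq ^ (-(w - r) * r) * qbinom qq w (r : ℤ)

lemma tt_zero (w : ℤ) : tt w 0 = 1 := by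
  rw [tt, qbinom_zero]; simp

lemma tt_succ (w : ℤ) (r : ℕ) :
    tt (w + 1) (r + 1) = tt w (r + 1) - qq ^ (-2 * (w - r)) * tt w r := by
  have h0 := qq_ne
  rw [tt, tt, tt, pascal good_q]
  have a1 : qq ^ (-(w + 1 - ((r + 1 : ℕ) : ℤ)) * ((r + 1 : ℕ) : ℤ)) * qq ^ ((r : ℤ) + 1)
      = qq ^ (-(w - ((r + 1 : ℕ) : ℤ)) * ((r + 1 : ℕ) : ℤ)) := by
    rw [← zpow_add₀ h0]; congr 1; push_cast; ring
  have a2 : qq ^ (-(w + 1 - ((r + 1 : ℕ) : ℤ)) * ((r + 1 : ℕ) : ℤ)) * qq ^ ((r : ℤ) - w)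
      = qq ^ (-2 * (w - r)) * qq ^ (-(w - (r : ℤ)) * (r : ℤ)) := by
    rw [← zpow_add₀ h0, ← zpow_add₀ h0]; congr 1; push_cast; ring
  rw [pow_succ]
  linear_combination (-(-1) ^ r * qbinom qq w ((r + 1 : ℕ) : ℤ)) * a1
    - ((-1) ^ r * qbinom qq w (r : ℤ)) * a2

/-- total -/
def gg (p w : ℤ) (u : ℕ) : F := ∑ r ∈ range (u + 1), tt w r * dd p (w - r) (u - r)

lemma gg_succ (p w : ℤ) (u : ℕ) : gg p (w + 1) u = gg p w u := by
  unfold gg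
  cases u with
  | zero => simp [tt_zero, dd_zero]
  | succ m =>
    have h1 : ∑ r ∈ range (m + 1 + 1), tt (w + 1) r * dd p (w + 1 - r) (m + 1 - r)
        = ∑ r ∈ range (m + 1 + 1), tt w r * dd p (w + 1 - r) (m + 1 - r)
          - ∑ r ∈ range (m + 1), qq ^ (-2 * (w - r)) * tt w r * dd p (w - r) (m - r) := by
      rw [Finset.sum_range_succ', Finset.sum_range_succ' _ (m + 1), tt_zero, tt_zero,
        add_sub_right_comm (∑ k ∈ range (m + 1), _), ← Finset.sum_sub_distrib]
      congr 1
      refine Finset.sum_congr rfl fun r _ => ?_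
      rw [tt_succ, show w + 1 - ((r + 1 : ℕ) : ℤ) = w - r by push_cast; ring,
        show m + 1 - (r + 1) = m - r by omega]
      ring
    rw [h1, Finset.sum_range_succ, Finset.sum_range_succ _ (m + 1), add_sub_right_comm,
      ← Finset.sum_sub_distrib]
    congr 1
    · refine Finset.sum_congr rfl fun r hr => ?_
      have : r ≤ m := by simpa [Nat.lt_succ_iff] using hr
      rw [show m + 1 - r = (m - r) + 1 by omega, show w + 1 - (r : ℤ) = (w - r) + 1 by ring, dd_succ]
      ring
    · rw [Nat.sub_self, show w + 1 - ((m + 1 : ℕ) : ℤ) = (w - (m + 1 : ℕ)) + 1 by ring, dd_zero]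

lemma gg_eq (p w : ℤ) (u : ℕ) : gg p w u = gg p 0 u := by
  induction w using Int.induction_on with
  | zero => rfl
  | succ i ih => rw [gg_succ, ih]
  | pred i ih => rw [← ih, ← gg_succ p (-(i : ℤ) - 1)]; congr 1; ring

lemma gg_zero (p : ℤ) (u : ℕ) :
    gg p 0 u = qq ^ (2 * (u : ℤ) + 2 * (u : ℤ) * p) * qbinom (qq ^ 2) p (u : ℤ) := by
  rw [gg, Finset.sum_range_succ', Finset.sum_eq_zero, tt_zero]
  · simp only [dd, D, Nat.cast_zero, sub_zero, Even.zero, if_true, EuclideanDomain.zero_div, A_zero,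
      zero_add, one_mul, mul_one, mul_zero, Nat.sub_zero]
    rw [A, PowerSeries.coeff_mk, mul_comm, ← zpow_natCast (qq ^ (2 + 2 * p)), ← zpow_mul]
    congr 2; ring
  · intro r _
    rw [tt, qbinom_zero_succ]; simp

lemma sum_reindex (u : ℕ) (f : ℕ → ℕ → ℕ → F) :
    ∑ c ∈ range (u + 1), ∑ e ∈ range (u + 1 - c), f c e (u - c - e)
      = ∑ r ∈ range (u + 1), ∑ x ∈ antidiagonal (u - r), f x.1 x.2 r := by
  rw [Finset.sum_sigma', Finset.sum_sigma']
  refine Finset.sum_bij' (fun x _ => ⟨u - x.1 - x.2, (x.1, x.2)⟩) (fun x _ => ⟨x.2.1, x.2.2⟩)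
    ?_ ?_ ?_ ?_ ?_
  · rintro ⟨c, e⟩ h; simp at h ⊢; omega
  · rintro ⟨r, c, e⟩ h; simp at h ⊢; omega
  · rintro ⟨c, e⟩ h; rfl
  · rintro ⟨r, c, e⟩ h
    simp at h ⊢; omega
  · rintro ⟨c, e⟩ h; rfl

/-- The identity [CLW, (5.7)]: a closed evaluation of `G₀₀(w,u;p1,0)`. -/
theorem G00_closed (w p1 : ℤ) (u : ℕ) :
    (-1 : F) ^ w * qq ^ ((u : ℤ) ^ 2 - w * (u : ℤ)) *
    ((∑ c ∈ range (u + 1), ∑ e ∈ range (u + 1 - c),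
        (let r : ℕ := u - c - e;
         if Even (w - (r : ℤ)) then
           qq ^ (-(u : ℤ) * ((c : ℤ) + (e : ℤ)) + 2 * (c : ℤ) + 2 * (c : ℤ) * p1)
             * qbinom qq w (r : ℤ)
             * qbinom (qq ^ 2) ((w - (r : ℤ)) / 2 + p1) (c : ℤ)
             * qbinom (qq ^ 2) ((w - (r : ℤ)) / 2) (e : ℤ)
         else 0))
     - (∑ c ∈ range (u + 1), ∑ e ∈ range (u + 1 - c),
        (let r : ℕ := u - c - e;
         if ¬ Even (w - (r : ℤ)) then
           qq ^ (-((u : ℤ) - 1) * ((c : ℤ) + (e : ℤ)) + 2 * (c : ℤ) * p1)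
             * qbinom qq w (r : ℤ)
             * qbinom (qq ^ 2) (1 + (w - (r : ℤ) - 1) / 2 + p1) (c : ℤ)
             * qbinom (qq ^ 2) ((w - (r : ℤ) - 1) / 2) (e : ℤ)
         else 0)))
    = qq ^ (2 * (u : ℤ) + 2 * (u : ℤ) * p1) * qbinom (qq ^ 2) p1 (u : ℤ) := by
  have h0 := qq_ne
  rw [← gg_zero, ← gg_eq p1 w u, gg]
  simp only
  rw [sum_reindex u (fun c e r => if Even (w - (r : ℤ)) then
           qq ^ (-(u : ℤ) * ((c : ℤ) + (e : ℤ)) + 2 * (c : ℤ) + 2 * (c : ℤ) * p1)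
             * qbinom qq w (r : ℤ)
             * qbinom (qq ^ 2) ((w - (r : ℤ)) / 2 + p1) (c : ℤ)
             * qbinom (qq ^ 2) ((w - (r : ℤ)) / 2) (e : ℤ)
         else 0),
    sum_reindex u (fun c e r => if ¬ Even (w - (r : ℤ)) then
           qq ^ (-((u : ℤ) - 1) * ((c : ℤ) + (e : ℤ)) + 2 * (c : ℤ) * p1)
             * qbinom qq w (r : ℤ)
             * qbinom (qq ^ 2) (1 + (w - (r : ℤ) - 1) / 2 + p1) (c : ℤ)
             * qbinom (qq ^ 2) ((w - (r : ℤ) - 1) / 2) (e : ℤ)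
         else 0), ← Finset.sum_sub_distrib, Finset.mul_sum]
  refine Finset.sum_congr rfl fun r hr => ?_
  rw [← Finset.sum_sub_distrib, Finset.mul_sum, dd, D]
  have hr' : r ≤ u := by simpa [Nat.lt_succ_iff] using hr
  by_cases hE : Even (w - (r : ℤ))
  · rw [if_pos hE, PowerSeries.coeff_mul, Finset.mul_sum]
    refine Finset.sum_congr rfl fun x hx => ?_
    obtain ⟨c, e⟩ := x
    have hx : c + e = u - r := by simpa using hx
    have hu : (u : ℤ) = c + e + r := by omega
    simp only [hE, not_true, if_true, if_false, sub_zero, A, PowerSeries.coeff_mk, tt]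
    obtain ⟨k, hk⟩ := hE
    have hw : w = k + k + r := by omega
    have hs : (-1 : F) ^ w = (-1) ^ r := by
      rw [hw, zpow_add₀ (by simp), zpow_natCast, Even.neg_one_zpow ⟨k, rfl⟩, one_mul]
    have hk2 : (w - (r : ℤ)) / 2 = k := by omega
    rw [hs, hk2]
    have hp : qq ^ ((u : ℤ) ^ 2 - w * (u : ℤ)) *
        qq ^ (-(u : ℤ) * ((c : ℤ) + (e : ℤ)) + 2 * (c : ℤ) + 2 * (c : ℤ) * p1)
        = qq ^ (-(w - (r : ℤ)) * r) * (qq ^ (-2 * k + 2 + 2 * p1)) ^ c * (qq ^ (-2 * k)) ^ e := by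
      rw [← zpow_natCast, ← zpow_natCast, ← zpow_mul, ← zpow_mul, ← zpow_add₀ h0, ← zpow_add₀ h0,
        ← zpow_add₀ h0]
      congr 1
      rw [hw, hu]; ring
    linear_combination ((-1) ^ r * qbinom qq w (r : ℤ) * qbinom (qq ^ 2) (k + p1) (c : ℤ)
      * qbinom (qq ^ 2) k (e : ℤ)) * hp
  · rw [if_neg hE, PowerSeries.coeff_mul, Finset.mul_sum]
    refine Finset.sum_congr rfl fun x hx => ?_
    obtain ⟨c, e⟩ := x
    have hx : c + e = u - r := by simpa using hx
    have hu : (u : ℤ) = c + e + r := by omega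
    simp only [hE, not_false_iff, if_true, if_false, zero_sub, A, PowerSeries.coeff_mk, tt]
    obtain ⟨k, hk⟩ := Int.not_even_iff_odd.1 hE
    have hw : w = 2 * k + 1 + r := by omega
    have hs : (-1 : F) ^ w = -(-1) ^ r := by
      rw [hw, zpow_add₀ (by simp), zpow_natCast, Odd.neg_one_zpow ⟨k, rfl⟩, neg_one_mul]
    have hk2 : (w - (r : ℤ) - 1) / 2 = k := by omega
    rw [hs, hk2]
    have hp : qq ^ ((u : ℤ) ^ 2 - w * (u : ℤ)) *
        qq ^ (-((u : ℤ) - 1) * ((c : ℤ) + (e : ℤ)) + 2 * (c : ℤ) * p1)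
        = qq ^ (-(w - (r : ℤ)) * r) * (qq ^ (-2 * k + 2 * p1)) ^ c * (qq ^ (-2 * k)) ^ e := by
      rw [← zpow_natCast, ← zpow_natCast, ← zpow_mul, ← zpow_mul, ← zpow_add₀ h0, ← zpow_add₀ h0,
        ← zpow_add₀ h0]
      congr 1
      rw [hw, hu]; ring
    linear_combination ((-1) ^ r * qbinom qq w (r : ℤ) * qbinom (qq ^ 2) (1 + k + p1) (c : ℤ)
      * qbinom (qq ^ 2) k (e : ℤ)) * hp

end
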